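/- arXiv:2411.15765 — 2 statements merged into one kernel-verified Lean document; each statement's English description precedes it below -/
import Mathlib

section
/- For every integer k ≥ 1 and every integer d ≥ 2 there exists a connected k-stepwise irregular graph whose diameter equals d. -/
open SimpleGraph Finset

/-- A graph `G` is `k`-stepwise irregular if the degrees of every pair of adjacent
vertices differ by exactly `k`. -/
def IsSI {V : Type*} [Fintype V] (G : SimpleGraph V) [DecidableRel G.Adj] (k : ℕ) : Prop :=
  ∀ ⦃u v : V⦄, G.Adj u v → |(G.degree u : ℤ) - (G.degree v : ℤ)| = (k : ℤ)

namespace SimpleGraph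

variable {V W : Type*}

lemma edist_le_edist_of_hom {G : SimpleGraph V} {H : SimpleGraph W} (f : G →g H) (a b : V) :
    H.edist (f a) (f b) ≤ G.edist a b := by
  rw [G.edist_eq_sInf]
  refine le_sInf ?_
  rintro _ ⟨p, rfl⟩
  simpa using edist_le (p.map f)

/-- A potential that grows by at most one along each edge bounds walk lengths from below. -/
lemma le_add_length_of_forall_adj {G : SimpleGraph V} {f : V → ℕ}
    (hf : ∀ u v, G.Adj u v → f v ≤ f u + 1) {u v : V} (p : G.Walk u v) :
    f v ≤ f u + p.length := by
  induction p with
  | nil => simp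
  | cons h p ih =>
    have := hf _ _ h
    simp only [Walk.length_cons]
    omega

lemma ediam_eq_of_potential {G : SimpleGraph V} {f : V → ℕ} {d : ℕ}
    (hf : ∀ u v, G.Adj u v → f v ≤ f u + 1) {s t : V} (hst : f s + d ≤ f t)
    (hle : ∀ u v, G.edist u v ≤ d) : G.ediam = d := by
  refine le_antisymm (ediam_le_of_edist_le hle) (le_trans ?_ (G.edist_le_ediam (u := s) (v := t)))
  rw [G.edist_eq_sInf]
  refine le_sInf ?_
  rintro _ ⟨p, rfl⟩
  have := le_add_length_of_forall_adj hf p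
  simp only [Nat.cast_le]
  omega

lemma exists_walk_comap {H : SimpleGraph W} {π : V → W} (hπ : π.Surjective) {u v : W}
    (p : H.Walk u v) (hp : p.length ≠ 0) (a b : V) (ha : π a = u) (hb : π b = v) :
    ∃ q : (H.comap π).Walk a b, q.length = p.length := by
  induction p generalizing a with
  | nil => simp at hp
  | @cons u x v h p ih =>
    rcases p with _ | ⟨h', p⟩
    · exact ⟨.cons (by simpa [ha, hb] using h) .nil, rfl⟩
    · obtain ⟨c, hc⟩ := hπ x
      obtain ⟨q, hq⟩ := ih (by simp) c hc hb
      exact ⟨.cons (by simpa [ha, hc] using h) q, by simp [hq]⟩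

/-- Replacing vertices by nonempty independent sets keeps every extended diameter `≥ 2`. -/
lemma ediam_comap {H : SimpleGraph W} (hH : H.Connected) {π : V → W} (hπ : π.Surjective)
    (h2 : 2 ≤ H.ediam) : (H.comap π).ediam = H.ediam := by
  apply le_antisymm
  · refine ediam_le_of_edist_le fun a b ↦ ?_
    by_cases hab : π a = π b
    · have : Nontrivial W := nontrivial_of_ediam_ne_zero (fun h ↦ absurd h2 (by rw [h]; decide))
      obtain ⟨x, hx⟩ := hH.preconnected.exists_adj_of_nontrivial (π a)
      obtain ⟨q, hq⟩ := exists_walk_comap hπ (.cons hx (.cons hx.symm .nil)) (by simp) a b rfl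
        hab.symm
      refine (edist_le q).trans ?_
      simpa [hq] using h2
    · obtain ⟨p, hp⟩ := hH.exists_walk_length_eq_edist (π a) (π b)
      have hp0 : p.length ≠ 0 := fun h ↦ hab (Walk.eq_of_length_eq_zero h)
      obtain ⟨q, hq⟩ := exists_walk_comap hπ p hp0 a b rfl rfl
      refine (edist_le q).trans ?_
      rw [hq, hp]
      exact edist_le_ediam
  · refine ediam_le_of_edist_le fun u v ↦ ?_
    obtain ⟨a, rfl⟩ := hπ u
    obtain ⟨b, rfl⟩ := hπ v
    exact (edist_le_edist_of_hom (Hom.comap π H) a b).trans edist_le_ediam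

lemma degree_comap [Fintype V] [Fintype W] [DecidableEq W] (H : SimpleGraph W)
    [DecidableRel H.Adj] (π : V → W) [DecidableRel (H.comap π).Adj] (a : V) :
    (H.comap π).degree a = ∑ u ∈ H.neighborFinset (π a), #{x | π x = u} := by
  rw [← card_neighborFinset_eq_degree,
    Finset.card_eq_sum_card_fiberwise (f := π) (t := H.neighborFinset (π a))]
  · refine Finset.sum_congr rfl fun u hu ↦ congrArg Finset.card ?_
    ext x
    simp only [mem_neighborFinset] at hu
    simp only [Finset.mem_filter, mem_neighborFinset, comap_adj, Finset.mem_univ, true_and,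
      and_iff_right_iff_imp]
    rintro rfl
    exact hu
  · intro x hx
    simpa using hx

lemma pathGraph_edist_le (d : ℕ) (u v : Fin (d + 1)) : (pathGraph (d + 1)).edist u v ≤ d := by
  have key : ∀ (m : ℕ) (u v : Fin (d + 1)), u.val + m = v.val →
      (pathGraph (d + 1)).edist u v ≤ m := by
    intro m
    induction m with
    | zero =>
      intro u v h
      simp [Fin.ext (a := u) (b := v) (by omega)]
    | succ m ih =>
      intro u v h
      have hx : u.val + m < d + 1 := by omega
      refine (SimpleGraph.edist_triangle (v := ⟨u.val + m, hx⟩)).trans ?_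
      push_cast
      refine add_le_add (ih _ _ rfl) (edist_eq_one_iff_adj.2 ?_).le
      rw [pathGraph_adj]
      simp only
      omega
  rcases le_total u.val v.val with h | h
  · exact (key (v.val - u.val) u v (by omega)).trans (by norm_cast; omega)
  · rw [edist_comm]
    exact (key (u.val - v.val) v u (by omega)).trans (by norm_cast; omega)

lemma pathGraph_ediam (d : ℕ) : (pathGraph (d + 1)).ediam = d := by
  refine ediam_eq_of_potential (f := Fin.val) (s := 0) (t := Fin.last d) ?_ (by simp)
    (pathGraph_edist_le d)
  intro u v h
  rw [pathGraph_adj] at h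
  omega

lemma sum_neighborFinset_pathGraph (d : ℕ) [DecidableRel (pathGraph (d + 1)).Adj] (w : ℕ → ℕ)
    (i : Fin (d + 1)) :
    ∑ j ∈ (pathGraph (d + 1)).neighborFinset i, w j =
      (if 0 < i.val then w (i - 1) else 0) + (if i.val < d then w (i + 1) else 0) := by
  have hsplit : ∀ j : Fin (d + 1), (if (pathGraph (d + 1)).Adj i j then w j else 0) =
      (if j.val + 1 = i.val then w j else 0) + (if j.val = i.val + 1 then w j else 0) := by
    intro j
    simp only [pathGraph_adj]
    split_ifs <;> omega
  rw [neighborFinset_eq_filter, Finset.sum_filter, Finset.sum_congr rfl fun j _ ↦ hsplit j,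
    Finset.sum_add_distrib,
    Fin.sum_univ_eq_sum_range (fun j ↦ if j + 1 = i.val then w j else 0),
    Fin.sum_univ_eq_sum_range (fun j ↦ if j = i.val + 1 then w j else 0)]
  congr 1
  · split_ifs with h
    · rw [Finset.sum_eq_single (i.val - 1)]
      · rw [if_pos (by omega)]
      · intro j _ hj
        rw [if_neg (by omega)]
      · intro hj
        simp only [Finset.mem_range] at hj
        omega
    · exact Finset.sum_eq_zero fun j _ ↦ if_neg (by omega)
  · rw [Finset.sum_ite_eq']
    simp

end SimpleGraph

/-- If `w` is a positive weighting of the vertices of `H` whose weighted degrees differ by one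
along edges, then replacing each vertex `v` by `k * w v` independent copies gives a `k`-stepwise
irregular graph. -/
lemma exists_ksi_of_weights {W : Type*} [Fintype W] [DecidableEq W] [Nonempty W]
    (H : SimpleGraph W) [DecidableRel H.Adj] (w : W → ℕ) (hw : ∀ v, 0 < w v)
    (hdeg : ∀ u v, H.Adj u v →
      |((∑ x ∈ H.neighborFinset u, w x : ℕ) : ℤ) - (∑ x ∈ H.neighborFinset v, w x : ℕ)| = 1)
    {k d : ℕ} (hk : 1 ≤ k) (hd : 2 ≤ d) (hdiam : H.ediam = d) :
    ∃ (n : ℕ) (G : SimpleGraph (Fin n)) (_ : DecidableRel G.Adj),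
      G.Connected ∧ IsSI G k ∧ G.diam = d := by
  have hH : H.Connected := connected_of_ediam_ne_top (by simp [hdiam])
  let e := Fintype.equivFin (Σ v : W, Fin (k * w v))
  let π : Fin (Fintype.card (Σ v : W, Fin (k * w v))) → W := fun x ↦ (e.symm x).1
  have hπ : π.Surjective := fun v ↦ ⟨e ⟨v, ⟨0, Nat.mul_pos hk (hw v)⟩⟩, by simp [π]⟩
  have hfib : ∀ v, #{x | π x = v} = k * w v := by
    intro v
    refine (Finset.card_fin (k * w v)).symm.trans ?_ |>.symm
    refine Finset.card_bij (fun a _ ↦ e ⟨v, a⟩) ?_ ?_ ?_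
    · intro a _
      simp [π]
    · intro a _ b _ hab
      simpa using hab
    · intro x hx
      obtain ⟨⟨u, a⟩, rfl⟩ := e.surjective x
      obtain rfl : u = v := by simpa [π] using hx
      exact ⟨a, Finset.mem_univ _, rfl⟩
  have hG : (H.comap π).ediam = d := by
    rw [ediam_comap hH hπ (by rw [hdiam]; exact_mod_cast hd), hdiam]
  have : Nonempty (Fin (Fintype.card (Σ v : W, Fin (k * w v)))) := hπ.nonempty
  refine ⟨_, H.comap π, Classical.decRel _, connected_of_ediam_ne_top (by simp [hG]), ?_,
    by simp [diam, hG]⟩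
  intro a b hab
  rw [degree_comap, degree_comap]
  simp only [hfib, ← Finset.mul_sum, Nat.cast_mul]
  rw [← mul_sub, abs_mul, hdeg _ _ hab]
  simp

lemma exists_ksi_of_path_weights (w : ℕ → ℕ) (hw : ∀ i, 0 < w i) {k d : ℕ} (hk : 1 ≤ k)
    (hd : 2 ≤ d)
    (hdeg : ∀ i < d, |(((if 0 < i then w (i - 1) else 0) + w (i + 1) : ℕ) : ℤ) -
      (w i + (if i + 1 < d then w (i + 2) else 0) : ℕ)| = 1) :
    ∃ (n : ℕ) (G : SimpleGraph (Fin n)) (_ : DecidableRel G.Adj),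
      G.Connected ∧ IsSI G k ∧ G.diam = d := by
  classical
  refine exists_ksi_of_weights (pathGraph (d + 1)) (fun i ↦ w i) (fun i ↦ hw i) ?_ hk hd
    (pathGraph_ediam d)
  have key : ∀ u v : Fin (d + 1), u.val + 1 = v.val →
      |((∑ x ∈ (pathGraph (d + 1)).neighborFinset u, w x : ℕ) : ℤ) -
        (∑ x ∈ (pathGraph (d + 1)).neighborFinset v, w x : ℕ)| = 1 := by
    intro u v h
    rw [sum_neighborFinset_pathGraph, sum_neighborFinset_pathGraph, ← h,
      if_pos (show u.val < d by omega), if_pos (Nat.succ_pos _)]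
    exact hdeg u (by omega)
  intro u v h
  rcases pathGraph_adj.1 h with h | h
  · exact key u v h
  · rw [abs_sub_comm]
    exact key v u h

/-- A hexagon `0, 4, 2, 3, 1, 5` with a further vertex `6` joined to `0`, `1` and `2`. -/
def hexagonWithApex : SimpleGraph (Fin 7) :=
  SimpleGraph.fromRel fun u v ↦ u.val < 3 ∧ 3 ≤ v.val ∧ v.val ≠ u.val + 3

instance : DecidableRel hexagonWithApex.Adj := fun _ _ ↦
  inferInstanceAs (Decidable (_ ∧ _))

lemma hexagonWithApex_edist_le (u v : Fin 7) : hexagonWithApex.edist u v ≤ 3 := by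
  have key : ∀ u v : Fin 7, ∃ x y : Fin 7, (u = x ∨ hexagonWithApex.Adj u x) ∧
      (x = y ∨ hexagonWithApex.Adj x y) ∧ (y = v ∨ hexagonWithApex.Adj y v) := by decide
  obtain ⟨x, y, hux, hxy, hyv⟩ := key u v
  calc hexagonWithApex.edist u v
      ≤ hexagonWithApex.edist u x + (hexagonWithApex.edist x y + hexagonWithApex.edist y v) :=
        SimpleGraph.edist_triangle.trans (add_le_add le_rfl SimpleGraph.edist_triangle)
    _ ≤ 1 + (1 + 1) := add_le_add (edist_le_one_iff_adj_or_eq.2 hux.symm)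
        (add_le_add (edist_le_one_iff_adj_or_eq.2 hxy.symm)
          (edist_le_one_iff_adj_or_eq.2 hyv.symm))
    _ = 3 := by norm_num

lemma hexagonWithApex_ediam : hexagonWithApex.ediam = (3 : ℕ) :=
  ediam_eq_of_potential (f := ![0, 2, 2, 3, 1, 1, 1]) (s := 0) (t := 3) (by decide) (by decide)
    hexagonWithApex_edist_le

/-- For any `k ≥ 1` and any `d ≥ 2` there exists a connected `k`-stepwise irregular
graph of diameter `d`. -/
theorem exists_ksi_of_diam (k d : ℕ) (hk : 1 ≤ k) (hd : 2 ≤ d) :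
    ∃ (n : ℕ) (G : SimpleGraph (Fin n)) (_ : DecidableRel G.Adj),
      G.Connected ∧ IsSI G k ∧ G.diam = d := by
  rcases Nat.even_or_odd' d with ⟨m, hm | hm⟩
  · refine exists_ksi_of_path_weights (fun i ↦ if i % 4 = 0 then 1 else 2)
      (fun i ↦ by split_ifs <;> omega) hk hd fun i hi ↦ ?_
    rw [abs_eq zero_le_one]
    split_ifs <;> omega
  · rcases (show d = 3 ∨ 5 ≤ d by omega) with rfl | h5
    · exact exists_ksi_of_weights hexagonWithApex ![2, 2, 2, 2, 2, 2, 1] (by decide) (by decide)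
        hk hd hexagonWithApex_ediam
    · refine exists_ksi_of_path_weights
        (fun i ↦ if i = 1 then 3 else if i % 4 = 1 then 1 else 2)
        (fun i ↦ by split_ifs <;> omega) hk hd fun i hi ↦ ?_
      rw [abs_eq zero_le_one]
      split_ifs <;> omega
end

section
/- Let k ≥ 1 be an integer and let G be a k-stepwise irregular graph on n vertices with at least one edge, maximum degree Δ = Δ(G) and m edges. If G is not isomorphic to the complete bipartite graph K_{Δ, Δ−k} and gcd(Δ, k) = 1, then m ≤ (Δ − k)(n − Δ + k − 1). -/
open SimpleGraph Finset

/-- A graph in which adjacency means being separated by `C` is complete bipartite. -/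
theorem nonempty_iso_completeBipartiteGraph {V : Type*} [Fintype V] [DecidableEq V]
    (G : SimpleGraph V) (C : Finset V) {a b : ℕ} (ha : #C = a) (hb : #Cᶜ = b)
    (h : ∀ u v, G.Adj u v ↔ ¬ (u ∈ C ↔ v ∈ C)) :
    Nonempty (G ≃g completeBipartiteGraph (Fin a) (Fin b)) := by
  let e₁ : {v // v ∈ C} ≃ Fin a := Fintype.equivFinOfCardEq (by simpa using ha)
  let e₂ : {v // ¬ v ∈ C} ≃ Fin b := Fintype.equivFinOfCardEq (by
    rw [Fintype.card_subtype_compl, Fintype.card_coe, ← card_compl, hb])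
  refine ⟨⟨(Equiv.sumCompl (· ∈ C)).symm.trans (Equiv.sumCongr e₁ e₂), ?_⟩⟩
  intro u v
  by_cases hu : u ∈ C <;> by_cases hv : v ∈ C <;>
    simp [h, hu, hv, Equiv.sumCompl_symm_apply_of_pos, Equiv.sumCompl_symm_apply_of_neg]

/-- The vertices at odd level, where the level of `v` is `⌊(Δ - deg v) / k⌋`. -/
def oddLevel {V : Type*} [Fintype V] (G : SimpleGraph V) [DecidableRel G.Adj] (k : ℕ) :
    Finset V :=
  {v | Odd ((G.maxDegree - G.degree v) / k)}

section

variable {V : Type*} [Fintype V] {G : SimpleGraph V} [DecidableRel G.Adj] {k : ℕ}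

theorem mem_oddLevel {v : V} :
    v ∈ oddLevel G k ↔ Odd ((G.maxDegree - G.degree v) / k) := by
  simp [oddLevel]

/-- Adjacent vertices of a stepwise irregular graph have degrees `d` and `d + k`. -/
theorem IsSI.degree_eq_or (hSI : IsSI G k) {u v : V} (h : G.Adj u v) :
    G.degree u = G.degree v + k ∨ G.degree v = G.degree u + k := by
  rcases abs_eq (Int.natCast_nonneg k) |>.1 (hSI h) with h | h <;> omega

/-- Adjacent vertices of a stepwise irregular graph have levels of different parity. -/
theorem IsSI.mem_oddLevel_iff (hk : 1 ≤ k) (hSI : IsSI G k) {u v : V} (h : G.Adj u v) :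
    u ∈ oddLevel G k ↔ v ∉ oddLevel G k := by
  have key : ∀ {u v : V}, G.degree u = G.degree v + k →
      (u ∈ oddLevel G k ↔ v ∉ oddLevel G k) := by
    intro u v huv
    have hu := G.degree_le_maxDegree u
    have : G.maxDegree - G.degree v = G.maxDegree - G.degree u + k := by omega
    rw [mem_oddLevel, mem_oddLevel, this, Nat.add_div_right _ hk, Nat.odd_add_one, not_not]
  rcases hSI.degree_eq_or h with h | h
  · exact key h
  · have := key h
    tauto

theorem degree_add_le_of_mem_oddLevel {v : V} (hv : v ∈ oddLevel G k) :
    G.degree v + k ≤ G.maxDegree := by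
  have hpos := (mem_oddLevel.1 hv).pos
  have := (Nat.div_pos_iff.1 hpos).2
  have := (Nat.div_pos_iff.1 hpos).1
  omega

/-- The edges of a stepwise irregular graph are counted by the degrees at odd level. -/
theorem IsSI.sum_degree_oddLevel [DecidableEq V] (hk : 1 ≤ k) (hSI : IsSI G k) :
    ∑ v ∈ oddLevel G k, G.degree v = #G.edgeFinset := by
  apply isBipartiteWith_sum_degrees_eq_card_edges (t := (oddLevel G k)ᶜ)
  refine ⟨by simpa using disjoint_compl_right, ?_⟩
  intro u v h
  have := hSI.mem_oddLevel_iff hk h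
  simp only [coe_compl, Set.mem_compl_iff, mem_coe]
  tauto

end

/-- If a `k`-stepwise irregular graph with an edge is not `K_{Δ, Δ−k}` and
`gcd(Δ, k) = 1`, then `m ≤ (Δ − k)(n − Δ + k − 1)`. -/
theorem ksi_size_le_of_not_completeBipartite {V : Type*} [Fintype V] [DecidableEq V]
    (G : SimpleGraph V) [DecidableRel G.Adj]
    (k : ℕ) (hk : 1 ≤ k) (hSI : IsSI G k) (he : ∃ u v, G.Adj u v)
    (hne : ¬ Nonempty (G ≃g completeBipartiteGraph (Fin G.maxDegree)
      (Fin (G.maxDegree - k))))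
    (hgcd : Nat.gcd G.maxDegree k = 1) :
    (G.edgeFinset.card : ℤ) ≤
      ((G.maxDegree : ℤ) - k) * ((Fintype.card V : ℤ) - G.maxDegree + k - 1) := by
  obtain ⟨u₀, v₀, h₀⟩ := he
  have : Nonempty V := ⟨u₀⟩
  obtain ⟨x, hx⟩ := G.exists_maximal_degree_vertex
  set C := oddLevel G k with hC
  have hxC : x ∉ C := by simp [hC, mem_oddLevel, ← hx]
  have hxdeg : ∀ v, G.Adj x v → G.degree v + k = G.maxDegree := by
    intro v hv
    have := G.degree_le_maxDegree v
    rcases hSI.degree_eq_or hv with h | h <;> omega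
  have hNx : G.neighborFinset x ⊆ C := by
    intro v hv
    by_contra hvC
    exact hxC ((hSI.mem_oddLevel_iff hk ((G.mem_neighborFinset x v).1 hv)).2 hvC)
  have hN : ∀ v ∈ C, G.neighborFinset v ⊆ Cᶜ := by
    intro v hv w hw
    rw [mem_compl]
    exact (hSI.mem_oddLevel_iff hk ((G.mem_neighborFinset v w).1 hw)).1 hv
  have hΔ : 0 < G.maxDegree :=
    ((G.degree_pos_iff_exists_adj u₀).2 ⟨v₀, h₀⟩).trans_le (G.degree_le_maxDegree u₀)
  obtain ⟨y, hy⟩ := (G.degree_pos_iff_exists_adj x).1 (hx ▸ hΔ)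
  obtain ⟨d, hd⟩ : ∃ d, G.degree y = d := ⟨_, rfl⟩
  have hdΔ : d + k = G.maxDegree := hd ▸ hxdeg y hy
  have hcard : #C + #Cᶜ = Fintype.card V := card_add_card_compl C
  have hsum : ∑ v ∈ C, G.degree v = #G.edgeFinset := hSI.sum_degree_oddLevel hk
  have hm : #G.edgeFinset ≤ #C * d := by
    rw [← hsum, ← smul_eq_mul]
    refine sum_le_card_nsmul _ _ _ fun v hv => ?_
    have := degree_add_le_of_mem_oddLevel hv
    omega
  suffices h : #G.edgeFinset ≤ d * (#C - 1) ∧ 1 ≤ #C ∧ d ≤ #Cᶜ ∨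
      #G.edgeFinset ≤ d * #C ∧ d + 1 ≤ #Cᶜ by
    have h1 : (G.maxDegree : ℤ) - k = d := by omega
    have h2 : (Fintype.card V : ℤ) - G.maxDegree + k - 1 = #C + #Cᶜ - d - 1 := by omega
    rw [h1, h2]
    rcases h with ⟨h, hC1, hB⟩ | ⟨h, hB⟩
    · zify [hC1] at h hB
      nlinarith
    · zify at h hB
      nlinarith
  have hdB : d ≤ #Cᶜ := by
    rw [← hd, ← G.card_neighborFinset_eq_degree]
    exact card_le_card (hN y (hNx (by simpa using hy)))
  have hNxcard : #(G.neighborFinset x) = G.maxDegree := by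
    rw [G.card_neighborFinset_eq_degree, hx]
  have hΔC : G.maxDegree ≤ #C := hNxcard ▸ card_le_card hNx
  rcases hdB.lt_or_eq with hlt | heq
  · exact Or.inr ⟨by linarith, hlt⟩
  refine Or.inl ⟨?_, by omega, hdB⟩
  have hNv : ∀ v, G.Adj x v → G.neighborFinset v = Cᶜ := by
    intro v hv
    refine eq_of_subset_of_card_le (hN v (hNx (by simpa using hv))) ?_
    have := hxdeg v hv
    rw [G.card_neighborFinset_eq_degree]
    omega
  rcases hΔC.lt_or_eq with hlt | hCeq
  · have hNw : ∀ w ∉ C, G.neighborFinset w = G.neighborFinset x := by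
      intro w hw
      refine (eq_of_subset_of_card_le (fun v hv => ?_) ?_).symm
      · have : w ∈ G.neighborFinset v := by
          rw [hNv v (by simpa using hv)]
          simpa using hw
        simpa [G.adj_comm] using this
      · rw [hNxcard, G.card_neighborFinset_eq_degree]
        exact G.degree_le_maxDegree w
    have hzero : ∀ v ∈ C, v ∉ G.neighborFinset x → G.degree v = 0 := by
      intro v hv hvx
      by_contra hpos
      obtain ⟨w, hw⟩ := (G.degree_pos_iff_exists_adj v).1 (Nat.pos_of_ne_zero hpos)
      have hwC : w ∉ C := (hSI.mem_oddLevel_iff hk hw).1 hv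
      rw [← hNw w hwC] at hvx
      exact hvx (by simpa using hw.symm)
    rw [← hsum, ← sum_subset hNx hzero]
    calc ∑ v ∈ G.neighborFinset x, G.degree v ≤ #(G.neighborFinset x) • d := by
          refine sum_le_card_nsmul _ _ _ fun v hv => ?_
          have := hxdeg v (by simpa using hv)
          omega
      _ = d * G.maxDegree := by rw [hNxcard, smul_eq_mul, mul_comm]
      _ ≤ d * (#C - 1) := Nat.mul_le_mul_left d (by omega)
  · have hCN : G.neighborFinset x = C := eq_of_subset_of_card_le hNx (by omega)
    have hNC : ∀ v ∈ C, ∀ w, G.Adj v w ↔ w ∉ C := by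
      intro v hv w
      rw [← G.mem_neighborFinset, hNv v (by simpa [← hCN] using hv), mem_compl]
    refine absurd (nonempty_iso_completeBipartiteGraph G C hCeq.symm (by omega) ?_) hne
    intro u v
    by_cases hu : u ∈ C
    · simp [hNC u hu, hu]
    · by_cases hv : v ∈ C
      · simp [G.adj_comm u v, hNC v hv, hu, hv]
      · have : ¬ G.Adj u v := fun h => hu ((hSI.mem_oddLevel_iff hk h).2 hv)
        simp [this, hu, hv]
end
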